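/- The scheme $Flag_{x,y,x}^\circ$ for $S=\mathbb{A}^2$, i.e. the subscheme of affine 12-space cut out by $X_{11}=X_{33}$, $Y_{11}=Y_{33}$, $X_{12}(Y_{11}-Y_{22}) = Y_{12}(X_{11}-X_{22})$, $X_{23}(Y_{22}-Y_{11}) = Y_{23}(X_{22}-X_{11})$, and $X_{12}Y_{23} = X_{23}Y_{12}$, is isomorphic to $\mathbb{A}^4 \times \mathrm{Spec}\, k[x_1,x_2,x_3,y_1,y_2,y_3]/(x_1y_2-x_2y_1, x_2y_3-x_3y_2, x_3y_1-x_1y_3)$, and in particular has dimension 8. -/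

import Mathlib

open MvPolynomial

/-!
In the coordinates `x₁ = X₁₂`, `x₂ = X₁₁ - X₂₂`, `x₃ = X₂₃` (and likewise `yᵢ`), the two linear
equations eliminate `X₃₃` and `Y₃₃`, while the three quadratic ones become the `2 × 2` minors of
`(xᵢ; yᵢ)`; they leave `X₁₁, X₁₃, Y₁₁, Y₁₃` free.

The determinantal ring is integral over the subalgebra generated by the four antidiagonal sums
`x₁`, `x₂ + y₁`, `x₃ + y₂`, `y₃`, which bounds its dimension above. On the rank one matrices
`xᵢ = aᵢ`, `yᵢ = t aᵢ` the function `y₁ = t a₁` is not a zero divisor but vanishes on `t = 0`,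
where the `aᵢ` are still free; this bounds its dimension below.
-/

section CoordRing

variable {σ k : Type*} [CommRing k]

/-- The coordinate ring `k[σ] ⧸ (s)` of the affine scheme cut out by the equations `s`. It is a
definition rather than an abbreviation so that polynomial rings over it do not unfold the ring
structure of the quotient. -/
def CoordRing (s : Set (MvPolynomial σ k)) : Type _ :=
  MvPolynomial σ k ⧸ Ideal.span s

namespace CoordRing

variable (s : Set (MvPolynomial σ k))

noncomputable instance : CommRing (CoordRing s) :=
  inferInstanceAs (CommRing (MvPolynomial σ k ⧸ Ideal.span s))

noncomputable instance : Algebra k (CoordRing s) :=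
  inferInstanceAs (Algebra k (MvPolynomial σ k ⧸ Ideal.span s))

instance [Finite σ] [IsNoetherianRing k] : IsNoetherianRing (CoordRing s) :=
  inferInstanceAs (IsNoetherianRing (MvPolynomial σ k ⧸ Ideal.span s))

/-- The coordinate functions on the affine scheme cut out by `s`. -/
noncomputable def coord (i : σ) : CoordRing s :=
  Ideal.Quotient.mk (Ideal.span s) (X i)

theorem aeval_coord (p : MvPolynomial σ k) :
    aeval (coord s) p = Ideal.Quotient.mk (Ideal.span s) p :=
  (DFunLike.congr_fun (aeval_unique (Ideal.Quotient.mkₐ k (Ideal.span s))) p).symm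

theorem aeval_coord_eq_zero : ∀ p ∈ s, aeval (coord s) p = 0 := fun p hp ↦
  (aeval_coord s p).trans (Ideal.Quotient.eq_zero_iff_mem.2 (Ideal.subset_span hp))

theorem aeval_coord_surjective : Function.Surjective (aeval (R := k) (coord s)) := fun x ↦
  let ⟨p, hp⟩ := Ideal.Quotient.mk_surjective x
  ⟨p, (aeval_coord s p).trans hp⟩

variable {s} {A : Type*} [CommRing A] [Algebra k A]

/-- The homomorphism out of `k[σ] ⧸ (s)` given by an `A`-valued common zero `a` of `s`. -/
noncomputable def lift (a : σ → A) (ha : ∀ p ∈ s, aeval a p = 0) : CoordRing s →ₐ[k] A :=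
  Ideal.Quotient.liftₐ (Ideal.span s) (aeval a) fun _ hp ↦
    (Ideal.span_le.2 ha : Ideal.span s ≤ RingHom.ker (aeval a)) hp

@[simp]
theorem lift_coord (a : σ → A) (ha : ∀ p ∈ s, aeval a p = 0) (i : σ) :
    lift a ha (coord s i) = a i :=
  aeval_X a i

theorem lift_comp_coord (a : σ → A) (ha : ∀ p ∈ s, aeval a p = 0) : lift a ha ∘ coord s = a :=
  funext (lift_coord a ha)

theorem algHom_ext {f g : CoordRing s →ₐ[k] A} (h : f ∘ coord s = g ∘ coord s) : f = g :=
  Ideal.Quotient.algHom_ext _ (MvPolynomial.algHom_ext (congrFun h))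

theorem isIntegral_of_coord [Algebra A (CoordRing s)] [IsScalarTower k A (CoordRing s)]
    (h : ∀ i, IsIntegral A (coord s i)) : Algebra.IsIntegral A (CoordRing s) := by
  have hle : Algebra.adjoin k (Set.range (coord s)) ≤
      (integralClosure A (CoordRing s)).restrictScalars k :=
    Algebra.adjoin_le (Set.range_subset_iff.2 h)
  rw [Algebra.adjoin_range_eq_range_aeval,
    (AlgHom.range_eq_top _).2 (aeval_coord_surjective s)] at hle
  exact ⟨fun x ↦ hle (Algebra.mem_top (x := x))⟩

end CoordRing

theorem aeval_comp_eq_zero {A B : Type*} [CommRing A] [Algebra k A] [CommRing B] [Algebra k B]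
    {s : Set (MvPolynomial σ k)} {a : σ → A} (ha : ∀ p ∈ s, aeval a p = 0) (f : A →ₐ[k] B) :
    ∀ p ∈ s, aeval (f ∘ a) p = 0 := fun p hp ↦
  (comp_aeval_apply a f p).symm.trans <| by rw [ha p hp, map_zero]

end CoordRing

open CoordRing

section KrullDimension

variable {A B R S : Type*} [CommRing A] [CommRing B] [CommRing R] [CommRing S]

theorem ringKrullDim_le_of_isIntegral [Algebra A B] [Algebra.IsIntegral A B] :
    ringKrullDim B ≤ ringKrullDim A :=
  Order.krullDim_le_of_strictMono (PrimeSpectrum.comap (algebraMap A B)) fun p q h ↦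
    Ideal.IsIntegral.comap_lt_comap (I := p.asIdeal) (J := q.asIdeal) h

theorem ringKrullDim_le_of_isIntegral_adjoin_range {ι : Type*} [Algebra A B] (a : ι → B)
    [Algebra.IsIntegral (Algebra.adjoin A (Set.range a)) B] :
    ringKrullDim B ≤ ringKrullDim (MvPolynomial ι A) := by
  refine (ringKrullDim_le_of_isIntegral (A := Algebra.adjoin A (Set.range a))).trans ?_
  rw [Algebra.adjoin_range_eq_range_aeval]
  exact ringKrullDim_le_of_surjective (aeval a).rangeRestrict.toRingHom
    (aeval a).rangeRestrict_surjective

theorem ringKrullDim_succ_le_of_comp_surjective (f : B →+* S) (g : S →+* R)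
    (hgf : Function.Surjective (g.comp f)) {b : B} (hb : f b ∈ nonZeroDivisors S)
    (hgb : g (f b) = 0) : ringKrullDim R + 1 ≤ ringKrullDim B := by
  have hb' : f.rangeRestrict b ∈ nonZeroDivisors f.range :=
    comap_nonZeroDivisors_le_of_injective (f := f.range.subtype) Subtype.val_injective hb
  have hsurj : Function.Surjective (g.comp f.range.subtype) := fun r ↦
    let ⟨c, hc⟩ := hgf r
    ⟨f.rangeRestrict c, hc⟩
  exact (ringKrullDim_succ_le_of_surjective _ hsurj hb' hgb).trans
    (ringKrullDim_le_of_surjective _ f.rangeRestrict_surjective)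

end KrullDimension

section Integrality

variable {A B : Type*} [CommRing A] [CommRing B] [Algebra A B]

theorem isIntegral_of_cubic_eq_zero {a b c r : B} (ha : IsIntegral A a) (hb : IsIntegral A b)
    (hc : IsIntegral A c) (h : r ^ 3 + a * r ^ 2 + b * r + c = 0) : IsIntegral A r := by
  lift a to integralClosure A B using ha
  lift b to integralClosure A B using hb
  lift c to integralClosure A B using hc
  refine isIntegral_trans (A := integralClosure A B) r
    ⟨Cubic.toPoly ⟨1, a, b, c⟩, Cubic.monic_of_a_eq_one', ?_⟩
  simpa [Cubic.toPoly] using h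

theorem isIntegral_of_minors_of_antidiagonal_sums {x₁ x₂ x₃ y₁ y₂ y₃ : B}
    (h₁₂ : x₁ * y₂ = x₂ * y₁) (h₃₁ : x₃ * y₁ = x₁ * y₃) (hx₁ : IsIntegral A x₁)
    (hx₂y₁ : IsIntegral A (x₂ + y₁)) (hx₃y₂ : IsIntegral A (x₃ + y₂)) (hy₃ : IsIntegral A y₃) :
    IsIntegral A y₁ := by
  refine isIntegral_of_cubic_eq_zero hx₂y₁.neg (hx₁.mul hx₃y₂) ((hx₁.pow 2).mul hy₃).neg ?_
  linear_combination y₁ * h₁₂ + x₁ * h₃₁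

end Integrality

section ChangeOfVariables

variable {A B : Type*} [AddCommGroup A] [AddCommGroup B]

/-- The pair of matrices with free coordinates `(X₁₁, X₁₃, Y₁₁, Y₁₃) = t` and with
`(X₁₂, X₁₁ - X₂₂, X₂₃, Y₁₂, Y₁₁ - Y₂₂, Y₂₃) = v`, as a point of affine `12`-space. -/
def flagPoint (v : Fin 6 → A) (t : Fin 4 → A) : Fin 12 → A :=
  ![t 0, v 0, t 1, t 0 - v 1, v 2, t 0, t 2, v 3, t 3, t 2 - v 4, v 5, t 2]

/-- The coordinates `(X₁₂, X₁₁ - X₂₂, X₂₃, Y₁₂, Y₁₁ - Y₂₂, Y₂₃)` of a point of affine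
`12`-space. -/
def minorPoint (w : Fin 12 → A) : Fin 6 → A :=
  ![w 1, w 0 - w 3, w 4, w 7, w 6 - w 9, w 10]

/-- The coordinates `(X₁₁, X₁₃, Y₁₁, Y₁₃)`, which the quadratic flag equations leave free. -/
def freeCoords {A : Type*} (w : Fin 12 → A) : Fin 4 → A :=
  ![w 0, w 2, w 6, w 8]

theorem minorPoint_flagPoint (v : Fin 6 → A) (t : Fin 4 → A) : minorPoint (flagPoint v t) = v := by
  ext i
  fin_cases i <;> simp [minorPoint, flagPoint]

theorem freeCoords_flagPoint (v : Fin 6 → A) (t : Fin 4 → A) : freeCoords (flagPoint v t) = t := by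
  ext i
  fin_cases i <;> rfl

theorem flagPoint_minorPoint_freeCoords {w : Fin 12 → A} (hX : w 0 = w 5) (hY : w 6 = w 11) :
    flagPoint (minorPoint w) (freeCoords w) = w := by
  ext i
  fin_cases i <;> simp [minorPoint, flagPoint, freeCoords, hX, hY]

theorem comp_flagPoint {F : Type*} [FunLike F A B] [AddMonoidHomClass F A B] (f : F)
    (v : Fin 6 → A) (t : Fin 4 → A) :
    f ∘ flagPoint v t = flagPoint (f ∘ v) (f ∘ t) := by
  ext i
  fin_cases i <;> simp [flagPoint]

theorem comp_minorPoint {F : Type*} [FunLike F A B] [AddMonoidHomClass F A B] (f : F)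
    (w : Fin 12 → A) :
    f ∘ minorPoint w = minorPoint (f ∘ w) := by
  ext i
  fin_cases i <;> simp [minorPoint]

theorem comp_freeCoords {A B : Type*} (f : A → B) (w : Fin 12 → A) :
    f ∘ freeCoords w = freeCoords (f ∘ w) := by
  ext i
  fin_cases i <;> rfl

end ChangeOfVariables

section FlagAndMinors

variable (k : Type*) [CommRing k]

/-- The equations of `Flag_{x,y,x}` in affine `12`-space, whose coordinates are
`X₁₁, X₁₂, X₁₃, X₂₂, X₂₃, X₃₃, Y₁₁, Y₁₂, Y₁₃, Y₂₂, Y₂₃, Y₃₃` in this order. -/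
abbrev flagEquations : Set (MvPolynomial (Fin 12) k) :=
  {X 0 - X 5,
   X 6 - X 11,
   X 1 * (X 6 - X 9) - X 7 * (X 0 - X 3),
   X 4 * (X 9 - X 6) - X 10 * (X 3 - X 0),
   X 1 * X 10 - X 4 * X 7}

/-- The `2 × 2` minors of the generic matrix with rows `X 0, X 1, X 2` and `X 3, X 4, X 5`. -/
abbrev minorEquations : Set (MvPolynomial (Fin 6) k) :=
  {X 0 * X 4 - X 1 * X 3,
   X 1 * X 5 - X 2 * X 4,
   X 2 * X 3 - X 0 * X 5}

/-- The coordinate ring of `Flag_{x,y,x}`. -/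
abbrev FlagRing : Type _ := CoordRing (flagEquations k)

/-- The coordinate ring of the scheme of `2 × 3` matrices of rank at most one. -/
abbrev MinorRing : Type _ := CoordRing (minorEquations k)

variable {k} {A : Type*} [CommRing A] [Algebra k A]

theorem aeval_flagEquations_eq_zero_iff {a : Fin 12 → A} :
    (∀ p ∈ flagEquations k, aeval a p = 0) ↔
      a 0 = a 5 ∧ a 6 = a 11 ∧
      a 1 * (a 6 - a 9) = a 7 * (a 0 - a 3) ∧
      a 4 * (a 9 - a 6) = a 10 * (a 3 - a 0) ∧
      a 1 * a 10 = a 4 * a 7 := by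
  simp [sub_eq_zero]

theorem aeval_minorEquations_eq_zero_iff {a : Fin 6 → A} :
    (∀ p ∈ minorEquations k, aeval a p = 0) ↔
      a 0 * a 4 = a 1 * a 3 ∧ a 1 * a 5 = a 2 * a 4 ∧ a 2 * a 3 = a 0 * a 5 := by
  simp [sub_eq_zero]

theorem flagPoint_mem_flag {v : Fin 6 → A} (hv : ∀ p ∈ minorEquations k, aeval v p = 0)
    (t : Fin 4 → A) : ∀ p ∈ flagEquations k, aeval (flagPoint v t) p = 0 := by
  obtain ⟨h₁₂, h₂₃, h₃₁⟩ := aeval_minorEquations_eq_zero_iff.1 hv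
  refine aeval_flagEquations_eq_zero_iff.2 ⟨rfl, rfl, ?_, ?_, h₃₁.symm⟩
  · change v 0 * (t 2 - (t 2 - v 4)) = v 3 * (t 0 - (t 0 - v 1))
    linear_combination h₁₂
  · change v 2 * (t 2 - v 4 - t 2) = v 5 * (t 0 - v 1 - t 0)
    linear_combination h₂₃

theorem minorPoint_mem_minor {w : Fin 12 → A} (hw : ∀ p ∈ flagEquations k, aeval w p = 0) :
    ∀ p ∈ minorEquations k, aeval (minorPoint w) p = 0 := by
  obtain ⟨-, -, h₁₂, h₂₃, h₁₃⟩ := aeval_flagEquations_eq_zero_iff.1 hw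
  refine aeval_minorEquations_eq_zero_iff.2 ⟨?_, ?_, h₁₃.symm⟩
  · change w 1 * (w 6 - w 9) = (w 0 - w 3) * w 7
    linear_combination h₁₂
  · change (w 0 - w 3) * w 10 = w 4 * (w 6 - w 9)
    linear_combination h₂₃

variable (k)

/-- The comorphism of `flagPoint`, on `𝔸⁴ × {2 × 3 matrices of rank at most one}`. -/
noncomputable def flagToAffineMinor : FlagRing k →ₐ[k] MvPolynomial (Fin 4) (MinorRing k) :=
  lift (flagPoint (C ∘ coord (minorEquations k)) X) <|
    flagPoint_mem_flag (aeval_comp_eq_zero (aeval_coord_eq_zero _)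
      (IsScalarTower.toAlgHom k (MinorRing k) (MvPolynomial (Fin 4) (MinorRing k)))) X

/-- The comorphism of `minorPoint`, on `Flag_{x,y,x}`. -/
noncomputable def minorToFlag : MinorRing k →ₐ[k] FlagRing k :=
  lift (minorPoint (coord (flagEquations k))) <|
    minorPoint_mem_minor (aeval_coord_eq_zero _)

/-- The comorphism of `w ↦ (freeCoords w, minorPoint w)`, on `Flag_{x,y,x}`. -/
noncomputable def affineMinorToFlag : MvPolynomial (Fin 4) (MinorRing k) →ₐ[k] FlagRing k :=
  aevalTower (minorToFlag k) (freeCoords (coord (flagEquations k)))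

theorem flagToAffineMinor_comp_coord :
    flagToAffineMinor k ∘ coord (flagEquations k) = flagPoint (C ∘ coord (minorEquations k)) X :=
  lift_comp_coord ..

theorem affineMinorToFlag_comp_C_comp_coord :
    affineMinorToFlag k ∘ C ∘ coord (minorEquations k) = minorPoint (coord (flagEquations k)) := by
  ext i
  simp [affineMinorToFlag, minorToFlag]

theorem affineMinorToFlag_comp_X :
    affineMinorToFlag k ∘ X = freeCoords (coord (flagEquations k)) := by
  ext i
  simp [affineMinorToFlag]

theorem flagToAffineMinor_comp_affineMinorToFlag :
    (flagToAffineMinor k).comp (affineMinorToFlag k) = AlgHom.id k _ := by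
  have hC : flagToAffineMinor k ∘ affineMinorToFlag k ∘ C ∘ coord (minorEquations k) =
      C ∘ coord (minorEquations k) := by
    rw [affineMinorToFlag_comp_C_comp_coord, comp_minorPoint, flagToAffineMinor_comp_coord,
      minorPoint_flagPoint]
  have hX : flagToAffineMinor k ∘ affineMinorToFlag k ∘ X = X := by
    rw [affineMinorToFlag_comp_X, comp_freeCoords, flagToAffineMinor_comp_coord,
      freeCoords_flagPoint]
  exact MvPolynomial.algHom_ext' (CoordRing.algHom_ext hC) (congrFun hX)

theorem affineMinorToFlag_comp_flagToAffineMinor :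
    (affineMinorToFlag k).comp (flagToAffineMinor k) = AlgHom.id k _ := by
  obtain ⟨hX, hY, -⟩ := aeval_flagEquations_eq_zero_iff.1 (aeval_coord_eq_zero (flagEquations k))
  have hcoord : affineMinorToFlag k ∘ flagToAffineMinor k ∘ coord (flagEquations k) =
      coord (flagEquations k) := by
    rw [flagToAffineMinor_comp_coord, comp_flagPoint, affineMinorToFlag_comp_C_comp_coord,
      affineMinorToFlag_comp_X, flagPoint_minorPoint_freeCoords hX hY]
  exact CoordRing.algHom_ext hcoord

/-- The isomorphism `Flag_{x,y,x} ≅ 𝔸⁴ × {2 × 3 matrices of rank at most one}`. -/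
noncomputable def flagEquivAffineMinor : FlagRing k ≃ₐ[k] MvPolynomial (Fin 4) (MinorRing k) :=
  AlgEquiv.ofAlgHom (flagToAffineMinor k) (affineMinorToFlag k)
    (flagToAffineMinor_comp_affineMinorToFlag k) (affineMinorToFlag_comp_flagToAffineMinor k)

/-- The antidiagonal sums `x₁, x₂ + y₁, x₃ + y₂, y₃`. If `(xᵢ) = s a` and `(yᵢ) = t a`, they are the
coefficients of `(s + t z) (a₁ + a₂ z + a₃ z ^ 2)`. -/
noncomputable def antidiagonalSums : Fin 4 → MinorRing k :=
  let v := coord (minorEquations k)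
  ![v 0, v 1 + v 3, v 2 + v 4, v 5]

instance isIntegral_adjoin_antidiagonalSums :
    Algebra.IsIntegral (Algebra.adjoin k (Set.range (antidiagonalSums k))) (MinorRing k) := by
  set S := Algebra.adjoin k (Set.range (antidiagonalSums k))
  let v := coord (minorEquations k)
  obtain ⟨h₁₂, h₂₃, h₃₁⟩ := aeval_minorEquations_eq_zero_iff.1
    (aeval_coord_eq_zero (minorEquations k))
  have hsum (i : Fin 4) : IsIntegral S (antidiagonalSums k i) :=
    isIntegral_algebraMap (x := (⟨_, Algebra.subset_adjoin ⟨i, rfl⟩⟩ : S))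
  have hx₁ : IsIntegral S (v 0) := hsum 0
  have hx₂y₁ : IsIntegral S (v 1 + v 3) := hsum 1
  have hx₃y₂ : IsIntegral S (v 2 + v 4) := hsum 2
  have hy₃ : IsIntegral S (v 5) := hsum 3
  have hy₁ : IsIntegral S (v 3) :=
    isIntegral_of_minors_of_antidiagonal_sums h₁₂ h₃₁ hx₁ hx₂y₁ hx₃y₂ hy₃
  -- Rotating the matrix by a half-turn swaps `x₃` with `y₁` and reverses the antidiagonal sums.
  have hx₃ : IsIntegral S (v 2) := by
    refine isIntegral_of_minors_of_antidiagonal_sums (x₁ := v 5) (x₂ := v 4) (x₃ := v 3)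
      (y₂ := v 1) (y₃ := v 0) ?_ ?_ hy₃ ?_ ?_ hx₁
    · linear_combination h₂₃
    · linear_combination h₃₁
    · rwa [add_comm]
    · rwa [add_comm]
  have hx₂ : IsIntegral S (v 1) := by simpa using hx₂y₁.sub hy₁
  have hy₂ : IsIntegral S (v 4) := by simpa using hx₃y₂.sub hx₃
  refine isIntegral_of_coord fun i ↦ ?_
  fin_cases i <;> assumption

/-- The parametrization `xᵢ = aᵢ`, `yᵢ = t aᵢ` of matrices of rank at most one, with
`a = (X 0, X 1, X 2)` and `t = X 3`. -/
noncomputable def minorParam : MinorRing k →ₐ[k] MvPolynomial (Fin 4) k :=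
  lift ![X 0, X 1, X 2, X 3 * X 0, X 3 * X 1, X 3 * X 2] <|
    aeval_minorEquations_eq_zero_iff.2 <| by
      simp only [Matrix.cons_val]
      exact ⟨by ring, by ring, by ring⟩

theorem ringKrullDim_minorRing_le [IsNoetherianRing k] :
    ringKrullDim (MinorRing k) ≤ ringKrullDim k + 4 := by
  simpa using ringKrullDim_le_of_isIntegral_adjoin_range (A := k) (antidiagonalSums k)

theorem le_ringKrullDim_minorRing : ringKrullDim k + 4 ≤ ringKrullDim (MinorRing k) := by
  let v := coord (minorEquations k)
  let restrict : MvPolynomial (Fin 4) k →ₐ[k] MvPolynomial (Fin 3) k := aeval ![X 0, X 1, X 2, 0]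
  have hsurj : Function.Surjective (restrict.comp (minorParam k)) := by
    have hsec : (restrict.comp (minorParam k)).comp (aeval ![v 0, v 1, v 2]) =
        AlgHom.id k (MvPolynomial (Fin 3) k) := by
      ext i : 1
      fin_cases i <;> simp [v, restrict, minorParam]
    exact fun p ↦ ⟨_, DFunLike.congr_fun hsec p⟩
  have hy₁ : minorParam k (v 3) = X 3 * X 0 := by simp [v, minorParam]
  have hreg : minorParam k (v 3) ∈ nonZeroDivisors (MvPolynomial (Fin 4) k) := by
    rw [hy₁]
    exact (isRegular_X.mul isRegular_X).mem_nonZeroDivisors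
  have hvanish : restrict (minorParam k (v 3)) = 0 := by simp [hy₁, restrict]
  calc ringKrullDim k + 4
      = ringKrullDim k + Nat.card (Fin 3) + 1 := by rw [add_assoc]; norm_num
    _ ≤ ringKrullDim (MvPolynomial (Fin 3) k) + 1 := by
      gcongr
      exact ringKrullDim_add_natCard_le_ringKrullDim_mvPolynomial (Fin 3)
    _ ≤ ringKrullDim (MinorRing k) :=
      ringKrullDim_succ_le_of_comp_surjective (minorParam k).toRingHom restrict.toRingHom
        hsurj hreg hvanish

theorem ringKrullDim_minorRing [IsNoetherianRing k] :
    ringKrullDim (MinorRing k) = ringKrullDim k + 4 :=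
  (ringKrullDim_minorRing_le k).antisymm (le_ringKrullDim_minorRing k)

end FlagAndMinors

theorem flag_xyx_iso_and_dimension_eight_general (k : Type*) [CommRing k] [IsNoetherianRing k] :
    Nonempty (FlagRing k ≃ₐ[k] MvPolynomial (Fin 4) (MinorRing k)) ∧
      ringKrullDim (FlagRing k) = ringKrullDim k + 8 := by
  refine ⟨⟨flagEquivAffineMinor k⟩, ?_⟩
  calc ringKrullDim (FlagRing k)
      = ringKrullDim (MvPolynomial (Fin 4) (MinorRing k)) :=
        ringKrullDim_eq_of_ringEquiv (flagEquivAffineMinor k).toRingEquiv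
    _ = ringKrullDim (MinorRing k) + Nat.card (Fin 4) := ringKrullDim_of_isNoetherianRing
    _ = ringKrullDim k + 8 := by rw [ringKrullDim_minorRing, add_assoc]; norm_num

/-- The scheme `Flag_{x,y,x}` for `S = 𝔸²` is isomorphic to
`𝔸⁴ × Spec k[x₁,x₂,x₃,y₁,y₂,y₃]/(x₁y₂-x₂y₁, x₂y₃-x₃y₂, x₃y₁-x₁y₃)` and has dimension 8.
Variables of `Fin 12`: `0,…,5` are `X₁₁,X₁₂,X₁₃,X₂₂,X₂₃,X₃₃` and `6,…,11` are
`Y₁₁,Y₁₂,Y₁₃,Y₂₂,Y₂₃,Y₃₃`.  Variables of `Fin 6`: `0,1,2` are `x₁,x₂,x₃` and `3,4,5`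
are `y₁,y₂,y₃`. -/
theorem flag_xyx_iso_and_dimension_eight {k : Type*} [Field k] :
    Nonempty ((MvPolynomial (Fin 12) k ⧸
        Ideal.span ({X 0 - X 5,
                     X 6 - X 11,
                     X 1 * (X 6 - X 9) - X 7 * (X 0 - X 3),
                     X 4 * (X 9 - X 6) - X 10 * (X 3 - X 0),
                     X 1 * X 10 - X 4 * X 7} : Set (MvPolynomial (Fin 12) k))) ≃ₐ[k]
      MvPolynomial (Fin 4) (MvPolynomial (Fin 6) k ⧸
        Ideal.span ({X 0 * X 4 - X 1 * X 3,
                     X 1 * X 5 - X 2 * X 4,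
                     X 2 * X 3 - X 0 * X 5} : Set (MvPolynomial (Fin 6) k)))) ∧
    ringKrullDim (MvPolynomial (Fin 12) k ⧸
        Ideal.span ({X 0 - X 5,
                     X 6 - X 11,
                     X 1 * (X 6 - X 9) - X 7 * (X 0 - X 3),
                     X 4 * (X 9 - X 6) - X 10 * (X 3 - X 0),
                     X 1 * X 10 - X 4 * X 7} : Set (MvPolynomial (Fin 12) k))) = 8 := by
  obtain ⟨e, hdim⟩ := flag_xyx_iso_and_dimension_eight_general k
  exact ⟨e, hdim.trans (by rw [ringKrullDim_eq_zero_of_field, zero_add])⟩
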